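/- arXiv:math/9804130 — 4 statements merged into one kernel-verified Lean document; each statement's English description precedes it below -/
import Mathlib

section
/- Let H⁻, H⁺ be complex separable Hilbert spaces and G₁, …, G_N : H⁻ → H⁺ bounded linear operators. Then the operator ζG := ∑_{k=1}^N ζ_k G_k is unitary for every ζ = (ζ₁,…,ζ_N) in the unit torus T^N (|ζ_k| = 1 for all k) if and only if the following four conditions hold: ∑_{k=1}^N G_k*G_k = I_{H⁻}; G_k*G_j = 0 for all k ≠ j; ∑_{k=1}^N G_k G_k* = I_{H⁺}; and G_k G_j* = 0 for all k ≠ j. -/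
open ContinuousLinearMap

noncomputable section

open scoped ComplexConjugate in
def sesqP {n : ℕ} {V : Type*} [AddCommGroup V] [Module ℂ V] (M : Fin n → Fin n → V)
    (x y : Fin n → ℂ) : V := ∑ k, ∑ j, (conj (x k) * y j) • M k j

section
variable {n : ℕ} {V : Type*} [AddCommGroup V] [Module ℂ V] (M : Fin n → Fin n → V)

lemma sesqP_add_left (x x' y : Fin n → ℂ) :
    sesqP M (x + x') y = sesqP M x y + sesqP M x' y := by
  simp [sesqP, add_mul, add_smul, Finset.sum_add_distrib]

lemma sesqP_add_right (x y y' : Fin n → ℂ) :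
    sesqP M x (y + y') = sesqP M x y + sesqP M x y' := by
  simp [sesqP, mul_add, add_smul, Finset.sum_add_distrib]

open scoped ComplexConjugate in
lemma sesqP_smul_left (z : ℂ) (x y : Fin n → ℂ) :
    sesqP M (z • x) y = conj z • sesqP M x y := by
  simp [sesqP, Finset.smul_sum, smul_smul, mul_assoc]

lemma sesqP_smul_right (z : ℂ) (x y : Fin n → ℂ) :
    sesqP M x (z • y) = z • sesqP M x y := by
  simp [sesqP, Finset.smul_sum, smul_smul, mul_left_comm]

lemma sesqP_single (a b : Fin n) : sesqP M (Pi.single a 1) (Pi.single b 1) = M a b := by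
  unfold sesqP
  rw [Finset.sum_eq_single a, Finset.sum_eq_single b]
  · simp
  · intro j _ h; simp [h]
  · simp
  · intro j _ h; simp [h]
  · simp

lemma sesqP_torus_diag (h0 : ∀ k j, k ≠ j → M k j = 0) (x : Fin n → ℂ)
    (hx : ∀ k, ‖x k‖ = 1) : sesqP M x x = ∑ k, M k k := by
  unfold sesqP
  refine Finset.sum_congr rfl fun k _ => ?_
  rw [Finset.sum_eq_single k]
  · rw [Complex.conj_mul', hx k]; simp
  · intro j _ h; rw [h0 k j h.symm, smul_zero]
  · simp

lemma sesqP_torus_offdiag (c : V)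
    (h : ∀ x : Fin n → ℂ, (∀ k, ‖x k‖ = 1) → sesqP M x x = c) (a b : Fin n) (hab : a ≠ b) :
    M a b = 0 := by
  have key : ∀ u : Fin n → ℂ, u a = 0 → (∀ k, k ≠ a → ‖u k‖ = 1) →
      sesqP M (Pi.single a 1) u = 0 := by
    intro u hu0 hu
    have h1 : ∀ z : ℂ, ‖z‖ = 1 →
        sesqP M (u + z • Pi.single a 1) (u + z • Pi.single a 1) = c := by
      intro z hz
      apply h
      intro k
      by_cases hk : k = a
      · subst hk; simp [hu0, hz]
      · simp [hk, hu k hk]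
    simp only [sesqP_add_left, sesqP_add_right, sesqP_smul_left, sesqP_smul_right] at h1
    have e1 := h1 1 (by simp)
    have e2 := h1 (-1) (by simp)
    have e3 := h1 Complex.I (by simp)
    have e4 := h1 (-Complex.I) (by simp)
    simp only [map_neg, map_one, Complex.conj_I, neg_neg] at e1 e2 e3 e4
    generalize sesqP M u u = A at *
    generalize sesqP M u (Pi.single a 1) = B at *
    generalize sesqP M (Pi.single a 1) u = C at *
    generalize sesqP M (Pi.single a 1) (Pi.single a 1) = D at *
    have f : (4 : ℂ) • C = 0 := by
      have I2 := Complex.I_mul_I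
      have g1 : (2 : ℂ) • B + (2 : ℂ) • C = 0 := by
        have := sub_eq_zero.2 (e1.trans e2.symm)
        rw [← this]; module
      have g2 : Complex.I • ((2 * Complex.I) • B - (2 * Complex.I) • C) = 0 := by
        have := sub_eq_zero.2 (e3.trans e4.symm)
        refine Eq.trans ?_ (smul_zero Complex.I)
        rw [← this]; module
      rw [smul_sub, smul_smul, smul_smul, mul_left_comm, I2] at g2
      have : (4 : ℂ) • C = ((2 : ℂ) • B + (2 : ℂ) • C) + ((2 * -1 : ℂ) • B - (2 * -1 : ℂ) • C) := by
        module
      rw [this, g1, g2, add_zero]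
    exact (smul_eq_zero.1 f).resolve_left (by norm_num)
  have k2 : ∀ z : ℂ, ‖z‖ = 1 → sesqP M (Pi.single a 1)
      ((fun k => if k = a ∨ k = b then 0 else 1) + z • Pi.single b 1) = 0 := by
    intro z hz
    apply key
    · simp [hab]
    · intro k hk
      by_cases hb : k = b
      · subst hb; simp [hz]
      · simp [hk, hb]
  simp only [sesqP_add_right, sesqP_smul_right, sesqP_single] at k2
  have e1 := k2 1 (by simp)
  have e2 := k2 (-1) (by simp)
  have f : (2 : ℂ) • M a b = 0 := by
    have := sub_eq_zero.2 (e1.trans e2.symm)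
    rw [← this]; module
  exact (smul_eq_zero.1 f).resolve_left (by norm_num)

lemma sesqP_torus_iff (c : V) :
    (∀ x : Fin n → ℂ, (∀ k, ‖x k‖ = 1) → sesqP M x x = c) ↔
      (∑ k, M k k = c ∧ ∀ k j, k ≠ j → M k j = 0) := by
  constructor
  · intro h
    have h0 := sesqP_torus_offdiag M c h
    exact ⟨by rw [← sesqP_torus_diag M h0 (fun _ => 1) (by simp)]; exact h _ (by simp), h0⟩
  · rintro ⟨h1, h0⟩ x hx
    rw [sesqP_torus_diag M h0 x hx, h1]

end

/-- for bounded operators `G₁, …, G_N : H⁻ → H⁺` between complex separable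
Hilbert spaces, `ζG = ∑ ζ_k G_k` is unitary for every `ζ` in the unit torus `T^N` iff
`∑ G_k* G_k = I`, `G_k* G_j = 0 (k ≠ j)`, `∑ G_k G_k* = I`, and `G_k G_j* = 0 (k ≠ j)`. -/
theorem unitary_pencil_iff {Nn : ℕ} {Hm Hp : Type*}
    [NormedAddCommGroup Hm] [InnerProductSpace ℂ Hm] [CompleteSpace Hm]
    [TopologicalSpace.SeparableSpace Hm]
    [NormedAddCommGroup Hp] [InnerProductSpace ℂ Hp] [CompleteSpace Hp]
    [TopologicalSpace.SeparableSpace Hp]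
    (G : Fin Nn → (Hm →L[ℂ] Hp)) :
    (∀ ζ : Fin Nn → ℂ, (∀ k, ‖ζ k‖ = 1) →
        (adjoint (∑ k, ζ k • G k) ∘L (∑ k, ζ k • G k) = ContinuousLinearMap.id ℂ Hm ∧
         (∑ k, ζ k • G k) ∘L adjoint (∑ k, ζ k • G k) = ContinuousLinearMap.id ℂ Hp)) ↔
    ((∑ k, adjoint (G k) ∘L G k = ContinuousLinearMap.id ℂ Hm) ∧
     (∀ k j, k ≠ j → adjoint (G k) ∘L G j = 0) ∧
     (∑ k, G k ∘L adjoint (G k) = ContinuousLinearMap.id ℂ Hp) ∧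
     (∀ k j, k ≠ j → G k ∘L adjoint (G j) = 0)) := by
  have hs : ∀ (z : ℂ) (T : Hm →L[ℂ] Hp), adjoint (z • T) = (starRingEnd ℂ) z • adjoint T :=
    fun z T => map_smulₛₗ _ _ _
  have hA : ∀ ζ : Fin Nn → ℂ, adjoint (∑ k, ζ k • G k) ∘L (∑ k, ζ k • G k) =
      sesqP (fun k j => adjoint (G k) ∘L G j) ζ ζ := by
    intro ζ
    ext v
    simp only [sesqP]
    rw [Finset.sum_comm]
    simp [map_sum, hs, Finset.smul_sum, smul_smul, mul_comm]
  have hB : ∀ ζ : Fin Nn → ℂ, (∑ k, ζ k • G k) ∘L adjoint (∑ k, ζ k • G k) =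
      sesqP (fun k j => G j ∘L adjoint (G k)) ζ ζ := by
    intro ζ
    ext v
    simp only [sesqP]
    simp [map_sum, hs, Finset.smul_sum, smul_smul, mul_comm]
  simp only [hA, hB, imp_and, forall_and]
  rw [sesqP_torus_iff, sesqP_torus_iff, and_assoc]
  refine and_congr_right fun _ => and_congr_right fun _ => and_congr_right fun _ => ?_
  exact ⟨fun h k j hkj => h j k hkj.symm, fun h k j hkj => h j k hkj.symm⟩
end
end

section
/- Let α = (N; A, B, C, D; X, N⁻, N⁺) be a multiparametric dissipative scattering LSDS, i.e. ‖ζG‖ ≤ 1 for all ζ ∈ T^N. Then for every z in the open unit polydisc D^N the operator I_X − zA is invertible, the transfer function θ_α(z) = zD + zC(I_X − zA)⁻¹zB is holomorphic on D^N, θ_α(0) = 0, and ‖θ_α(z)‖ ≤ 1 for all z ∈ D^N. -/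
open ContinuousLinearMap

noncomputable section

/-- The block operator `[[A, B], [C, D]] : X ⊕ N⁻ → X ⊕ N⁺` (Hilbert space direct sum). -/
def blockOp {X Nm Np : Type*}
    [NormedAddCommGroup X] [InnerProductSpace ℂ X]
    [NormedAddCommGroup Nm] [InnerProductSpace ℂ Nm]
    [NormedAddCommGroup Np] [InnerProductSpace ℂ Np]
    (A : X →L[ℂ] X) (B : Nm →L[ℂ] X) (C : X →L[ℂ] Np) (D : Nm →L[ℂ] Np) :
    WithLp 2 (X × Nm) →L[ℂ] WithLp 2 (X × Np) :=
  ((WithLp.prodContinuousLinearEquiv 2 ℂ X Np).symm :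
      (X × Np) →L[ℂ] WithLp 2 (X × Np)) ∘L
    ((A ∘L ContinuousLinearMap.fst ℂ X Nm + B ∘L ContinuousLinearMap.snd ℂ X Nm).prod
      (C ∘L ContinuousLinearMap.fst ℂ X Nm + D ∘L ContinuousLinearMap.snd ℂ X Nm)) ∘L
    (WithLp.prodContinuousLinearEquiv 2 ℂ X Nm : WithLp 2 (X × Nm) →L[ℂ] (X × Nm))

lemma blockOp_apply_fst {X Nm Np : Type*}
    [NormedAddCommGroup X] [InnerProductSpace ℂ X]
    [NormedAddCommGroup Nm] [InnerProductSpace ℂ Nm]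
    [NormedAddCommGroup Np] [InnerProductSpace ℂ Np]
    (A : X →L[ℂ] X) (B : Nm →L[ℂ] X) (C : X →L[ℂ] Np) (D : Nm →L[ℂ] Np) (x : X) (u : Nm) :
    blockOp A B C D (WithLp.toLp 2 (x, u)) = WithLp.toLp 2 (A x + B u, C x + D u) := by
  simp [blockOp]

lemma blockOp_bound {X Nm Np : Type*}
    [NormedAddCommGroup X] [InnerProductSpace ℂ X]
    [NormedAddCommGroup Nm] [InnerProductSpace ℂ Nm]
    [NormedAddCommGroup Np] [InnerProductSpace ℂ Np]
    (A : X →L[ℂ] X) (B : Nm →L[ℂ] X) (C : X →L[ℂ] Np) (D : Nm →L[ℂ] Np) {r : ℝ} (hr : 0 ≤ r)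
    (h : ‖blockOp A B C D‖ ≤ r) (x : X) (u : Nm) :
    ‖A x + B u‖ ^ 2 + ‖C x + D u‖ ^ 2 ≤ r ^ 2 * (‖x‖ ^ 2 + ‖u‖ ^ 2) := by
  have h1 := (blockOp A B C D).le_of_opNorm_le h (WithLp.toLp 2 (x, u))
  rw [blockOp_apply_fst] at h1
  have h2 := pow_le_pow_left₀ (norm_nonneg _) h1 2
  rw [mul_pow, WithLp.prod_norm_sq_eq_of_L2, WithLp.prod_norm_sq_eq_of_L2] at h2
  simpa using h2

lemma blockOp_sum {n : ℕ} {X Nm Np : Type*}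
    [NormedAddCommGroup X] [InnerProductSpace ℂ X]
    [NormedAddCommGroup Nm] [InnerProductSpace ℂ Nm]
    [NormedAddCommGroup Np] [InnerProductSpace ℂ Np]
    (A : Fin n → (X →L[ℂ] X)) (B : Fin n → (Nm →L[ℂ] X))
    (C : Fin n → (X →L[ℂ] Np)) (D : Fin n → (Nm →L[ℂ] Np)) (z : Fin n → ℂ) :
    blockOp (∑ k, z k • A k) (∑ k, z k • B k) (∑ k, z k • C k) (∑ k, z k • D k) =
      ∑ k, z k • blockOp (A k) (B k) (C k) (D k) := by
  ext1 p
  obtain ⟨x, u⟩ := p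
  apply (WithLp.linearEquiv 2 ℂ (X × Np)).injective
  simp only [sum_apply, map_sum, smul_apply, map_smul, blockOp_apply_fst]
  apply Prod.ext <;>
  simp [Prod.fst_sum, Prod.snd_sum, Finset.sum_add_distrib]

lemma norm_sum_smul_le_one {n : ℕ} {E : Type*} [NormedAddCommGroup E] [NormedSpace ℂ E]
    (G : Fin n → E) (h : ∀ ζ : Fin n → ℂ, (∀ k, ‖ζ k‖ = 1) → ‖∑ k, ζ k • G k‖ ≤ 1)
    (z : Fin n → ℂ) (hz : ∀ k, ‖z k‖ ≤ 1) : ‖∑ k, z k • G k‖ ≤ 1 := by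
  let L : (Fin n → ℂ) →ₗ[ℝ] E := (Fintype.linearCombination ℂ G).restrictScalars ℝ
  have hc : Convex ℝ (L ⁻¹' Metric.closedBall 0 1) :=
    (convex_closedBall (0 : E) 1).linear_preimage L
  have hsub : Set.univ.pi (fun _ : Fin n => Metric.sphere (0 : ℂ) 1) ⊆
      L ⁻¹' Metric.closedBall 0 1 := by
    intro ζ hζ
    have := h ζ (fun k => by simpa using hζ k (Set.mem_univ k))
    simpa [L, Fintype.linearCombination_apply] using this
  have hm := convexHull_min hsub hc
  rw [convexHull_pi] at hm
  have hz' : z ∈ Set.univ.pi (fun _ : Fin n => convexHull ℝ (Metric.sphere (0 : ℂ) 1)) := by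
    intro k _
    rw [convexHull_sphere_eq_closedBall _ zero_le_one]
    simpa using hz k
  simpa [L, Fintype.linearCombination_apply] using hm hz'

lemma norm_sum_smul_le_norm {n : ℕ} {E : Type*} [NormedAddCommGroup E] [NormedSpace ℂ E]
    (G : Fin n → E) (h : ∀ ζ : Fin n → ℂ, (∀ k, ‖ζ k‖ = 1) → ‖∑ k, ζ k • G k‖ ≤ 1)
    (z : Fin n → ℂ) : ‖∑ k, z k • G k‖ ≤ ‖z‖ := by
  rcases eq_or_ne z 0 with rfl | hz
  · simp
  have hp : 0 < ‖z‖ := norm_pos_iff.2 hz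
  have h1 := norm_sum_smul_le_one G h (fun k => ((‖z‖⁻¹ : ℝ) : ℂ) * z k) (fun k => by
    rw [norm_mul, Complex.norm_real, norm_inv, norm_norm, inv_mul_le_iff₀ hp, mul_one]
    exact norm_le_pi_norm z k)
  simp only [mul_smul, ← Finset.smul_sum] at h1
  rwa [norm_smul, Complex.norm_real, norm_inv, norm_norm, inv_mul_le_iff₀ hp, mul_one] at h1

/-- if `α = (N; A, B, C, D; X, N⁻, N⁺)` is a multiparametric dissipative
scattering LSDS (`‖ζG‖ ≤ 1` for all `ζ ∈ T^N`), then for every `z` in the open unit polydisc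
`I_X − zA` is invertible, the transfer function `θ_α(z) = zD + zC (I_X − zA)⁻¹ zB` is
holomorphic on `D^N`, `θ_α(0) = 0`, and `‖θ_α(z)‖ ≤ 1` on `D^N`. -/
theorem transfer_function_of_multiparam_dissipative {Nn : ℕ} {X Nm Np : Type*}
    [NormedAddCommGroup X] [InnerProductSpace ℂ X] [CompleteSpace X]
    [TopologicalSpace.SeparableSpace X]
    [NormedAddCommGroup Nm] [InnerProductSpace ℂ Nm] [CompleteSpace Nm]
    [TopologicalSpace.SeparableSpace Nm]
    [NormedAddCommGroup Np] [InnerProductSpace ℂ Np] [CompleteSpace Np]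
    [TopologicalSpace.SeparableSpace Np]
    (A : Fin Nn → (X →L[ℂ] X)) (B : Fin Nn → (Nm →L[ℂ] X))
    (C : Fin Nn → (X →L[ℂ] Np)) (D : Fin Nn → (Nm →L[ℂ] Np))
    (hdis : ∀ ζ : Fin Nn → ℂ, (∀ k, ‖ζ k‖ = 1) →
      ‖blockOp (∑ k, ζ k • A k) (∑ k, ζ k • B k) (∑ k, ζ k • C k) (∑ k, ζ k • D k)‖ ≤ 1)
    (θ : (Fin Nn → ℂ) → (Nm →L[ℂ] Np))
    (hθ : ∀ z : Fin Nn → ℂ, θ z =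
      ∑ k, z k • D k +
        (∑ k, z k • C k) ∘L (Ring.inverse (1 - ∑ k, z k • A k)) ∘L (∑ k, z k • B k)) :
    (∀ z : Fin Nn → ℂ, (∀ k, ‖z k‖ < 1) → IsUnit ((1 : X →L[ℂ] X) - ∑ k, z k • A k)) ∧
    DifferentiableOn ℂ θ {z : Fin Nn → ℂ | ∀ k, ‖z k‖ < 1} ∧
    θ 0 = 0 ∧
    (∀ z : Fin Nn → ℂ, (∀ k, ‖z k‖ < 1) → ‖θ z‖ ≤ 1) := by
  have hG : ∀ z : Fin Nn → ℂ, ‖blockOp (∑ k, z k • A k) (∑ k, z k • B k) (∑ k, z k • C k)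
      (∑ k, z k • D k)‖ ≤ ‖z‖ := by
    intro z
    rw [blockOp_sum]
    refine norm_sum_smul_le_norm (fun k => blockOp (A k) (B k) (C k) (D k)) (fun ζ hζ => ?_) z
    rw [← blockOp_sum]
    exact hdis ζ hζ
  have hlt : ∀ z : Fin Nn → ℂ, (∀ k, ‖z k‖ < 1) → ‖z‖ < 1 := fun z hz =>
    (pi_norm_lt_iff zero_lt_one).2 hz
  have hU : ∀ z : Fin Nn → ℂ, (∀ k, ‖z k‖ < 1) →
      IsUnit ((1 : X →L[ℂ] X) - ∑ k, z k • A k) := by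
    intro z hz
    apply isUnit_one_sub_of_norm_lt_one
    refine lt_of_le_of_lt ?_ (hlt z hz)
    refine ContinuousLinearMap.opNorm_le_bound _ (norm_nonneg _) (fun x => ?_)
    have := blockOp_bound _ _ _ _ (norm_nonneg z) (hG z) x 0
    simp only [map_zero, add_zero, norm_zero] at this
    refine le_of_sq_le_sq ?_ (by positivity)
    nlinarith [sq_nonneg ‖(∑ k, z k • C k) x‖]
  refine ⟨hU, ?_, ?_, ?_⟩
  · intro z hz
    apply DifferentiableAt.differentiableWithinAt
    have e : θ = fun z => _ := funext hθ
    rw [e]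
    have hinv : DifferentiableAt ℂ
        (fun z : Fin Nn → ℂ => Ring.inverse ((1 : X →L[ℂ] X) - ∑ k, z k • A k)) z := by
      obtain ⟨v, hv⟩ := hU z hz
      have h1 : DifferentiableAt ℂ (Ring.inverse : (X →L[ℂ] X) → _)
          ((1 : X →L[ℂ] X) - ∑ k, z k • A k) := by
        rw [← hv]
        exact differentiableAt_inverse v.isUnit
      exact h1.comp z (f := fun z : Fin Nn → ℂ => (1 : X →L[ℂ] X) - ∑ k, z k • A k)
        (by fun_prop)
    refine DifferentiableAt.add (by fun_prop) ?_
    refine DifferentiableAt.clm_comp (by fun_prop) ?_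
    exact hinv.clm_comp (by fun_prop)
  · rw [hθ]
    simp
  · intro z hz
    refine ContinuousLinearMap.opNorm_le_bound _ zero_le_one (fun u => ?_)
    rw [one_mul]
    obtain ⟨x, hx⟩ : ∃ x, x = Ring.inverse (1 - ∑ k, z k • A k) ((∑ k, z k • B k) u) := ⟨_, rfl⟩
    have h1 : (∑ k, z k • A k) x + (∑ k, z k • B k) u = x := by
      have := congrArg (fun T : X →L[ℂ] X => T ((∑ k, z k • B k) u))
        (Ring.mul_inverse_cancel _ (hU z hz))
      simp only [ContinuousLinearMap.mul_apply, ← hx, ContinuousLinearMap.sub_apply,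
        ContinuousLinearMap.one_apply] at this
      rw [← this]
      abel
    have h2 : (∑ k, z k • C k) x + (∑ k, z k • D k) u = θ z u := by
      rw [hθ, hx, add_comm]
      rfl
    have h3 := blockOp_bound _ _ _ _ zero_le_one ((hG z).trans (hlt z hz).le) x u
    rw [h1, h2] at h3
    refine le_of_sq_le_sq ?_ (norm_nonneg _)
    linarith
end
end

section
/- Let α = (N; A, B, C, D; X, N⁻, N⁺) be a multiparametric conservative scattering LSDS, i.e. ζG is unitary for every ζ ∈ T^N, with transfer function θ_α on D^N. For k = 1,…,N and z ∈ D^N define F_k(z) : N⁻ → X ⊕ N⁺ by F_k(z) = G_k ∘ col((I_X − zA)⁻¹zB, I_{N⁻}), where G_k = [[A_k, B_k], [C_k, D_k]] : X ⊕ N⁻ → X ⊕ N⁺ and col(R, S)u = (Ru, Su). Then each F_k is holomorphic on D^N and for all λ, z ∈ D^N: I_{N⁻} − θ_α(λ)*θ_α(z) = ∑_{k=1}^N (1 − conj(λ_k) z_k) F_k(λ)*F_k(z). In particular θ_α admits an Agler decomposition and θ_α(0) = 0. -/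
open ContinuousLinearMap

noncomputable section

/-- The column operator `col(R, I) : N⁻ → X ⊕ N⁻`, `u ↦ (R u, u)`. -/
def colOp {X Nm : Type*}
    [NormedAddCommGroup X] [InnerProductSpace ℂ X]
    [NormedAddCommGroup Nm] [InnerProductSpace ℂ Nm]
    (R : Nm →L[ℂ] X) : Nm →L[ℂ] WithLp 2 (X × Nm) :=
  ((WithLp.prodContinuousLinearEquiv 2 ℂ X Nm).symm :
      (X × Nm) →L[ℂ] WithLp 2 (X × Nm)) ∘L (R.prod (ContinuousLinearMap.id ℂ Nm))

/-- A bounded operator between Hilbert spaces is unitary: `G*G = I` and `GG* = I`. -/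
def IsUnitaryOp {E F : Type*}
    [NormedAddCommGroup E] [InnerProductSpace ℂ E] [CompleteSpace E]
    [NormedAddCommGroup F] [InnerProductSpace ℂ F] [CompleteSpace F]
    (G : E →L[ℂ] F) : Prop :=
  adjoint G ∘L G = ContinuousLinearMap.id ℂ E ∧
    G ∘L adjoint G = ContinuousLinearMap.id ℂ F

section AuxLemmas

variable {X Nm Np : Type*}
    [NormedAddCommGroup X] [InnerProductSpace ℂ X]
    [NormedAddCommGroup Nm] [InnerProductSpace ℂ Nm]
    [NormedAddCommGroup Np] [InnerProductSpace ℂ Np]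

theorem aux_blockOp_apply (A : X →L[ℂ] X) (B : Nm →L[ℂ] X) (C : X →L[ℂ] Np) (D : Nm →L[ℂ] Np)
    (v : WithLp 2 (X × Nm)) :
    blockOp A B C D v = WithLp.toLp 2 (A v.fst + B v.snd, C v.fst + D v.snd) := rfl

theorem aux_colOp_apply (R : Nm →L[ℂ] X) (u : Nm) :
    colOp R u = WithLp.toLp 2 (R u, u) := rfl

theorem aux_blockOp_sum {n : ℕ} (A : Fin n → (X →L[ℂ] X)) (B : Fin n → (Nm →L[ℂ] X))
    (C : Fin n → (X →L[ℂ] Np)) (D : Fin n → (Nm →L[ℂ] Np)) (z : Fin n → ℂ)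
    (v : WithLp 2 (X × Nm)) :
    blockOp (∑ k, z k • A k) (∑ k, z k • B k) (∑ k, z k • C k) (∑ k, z k • D k) v
      = ∑ k, z k • blockOp (A k) (B k) (C k) (D k) v := by
  apply (WithLp.prodContinuousLinearEquiv 2 ℂ X Np).injective
  rw [map_sum]
  simp only [map_smul]
  ext
  · simp [aux_blockOp_apply, Prod.fst_sum, ContinuousLinearMap.sum_apply,
      Finset.sum_add_distrib]
  · simp [aux_blockOp_apply, Prod.snd_sum, ContinuousLinearMap.sum_apply,
      Finset.sum_add_distrib]

theorem aux_orth1 {E : Type*} [NormedAddCommGroup E] [InnerProductSpace ℂ E] (U V u v : E) (c : ℂ)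
    (h : ∀ t : ℂ, ‖t‖ = 1 → inner ℂ (t • u + U) (t • v + V) = c) : inner ℂ u V = 0 := by
  have h1 := h 1 (by simp)
  have h2 := h (-1) (by simp)
  have h3 := h Complex.I (by simp)
  simp only [inner_add_left, inner_add_right, inner_smul_left, inner_smul_right, map_one,
    map_neg, Complex.conj_I] at h1 h2 h3
  have hI := Complex.I_mul_I
  linear_combination (1 / 4 : ℂ) * (h1 - h2) + Complex.I / 2 * (h3 - (h1 + h2) / 2)
    + ((inner ℂ u V - inner ℂ U v) / 2 + Complex.I * inner ℂ u v / 2) * hI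

theorem aux_orth {E : Type*} [NormedAddCommGroup E] [InnerProductSpace ℂ E] {n : ℕ}
    (u v : Fin n → E) (c : ℂ)
    (h : ∀ ζ : Fin n → ℂ, (∀ k, ‖ζ k‖ = 1) → inner ℂ (∑ k, ζ k • u k) (∑ k, ζ k • v k) = c)
    (j k : Fin n) (hjk : j ≠ k) : inner ℂ (u j) (v k) = 0 := by
  have key : ∀ ζ : Fin n → ℂ, (∀ k, ‖ζ k‖ = 1) →
      inner ℂ (u j) (∑ i ∈ Finset.univ.erase j, ζ i • v i) = 0 := by
    intro ζ hζ
    apply aux_orth1 (∑ i ∈ Finset.univ.erase j, ζ i • u i) _ _ (v j) c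
    intro t ht
    have h1 := h (Function.update ζ j t) (by
      intro i
      by_cases hi : i = j
      · subst hi; simpa using ht
      · simpa [hi] using hζ i)
    rw [← Finset.add_sum_erase _ _ (Finset.mem_univ j),
      ← Finset.add_sum_erase _ (fun i => Function.update ζ j t i • v i) (Finset.mem_univ j)] at h1
    have e : ∀ w : Fin n → E, ∑ i ∈ Finset.univ.erase j, Function.update ζ j t i • w i
        = ∑ i ∈ Finset.univ.erase j, ζ i • w i := by
      intro w
      refine Finset.sum_congr rfl fun i hi => ?_
      rw [Function.update_of_ne (Finset.ne_of_mem_erase hi)]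
    rw [e, e] at h1
    simpa using h1
  have k1 := key (fun _ => 1) (by simp)
  have k2 := key (Function.update (fun _ => 1) k (-1)) (by
      intro i
      by_cases hi : i = k
      · subst hi; simp
      · simp [hi])
  have hk : k ∈ Finset.univ.erase j := by simp [hjk.symm]
  rw [← Finset.add_sum_erase _ _ hk] at k1 k2
  have e : ∑ i ∈ (Finset.univ.erase j).erase k,
      Function.update (fun _ => (1 : ℂ)) k (-1) i • v i
      = ∑ i ∈ (Finset.univ.erase j).erase k, (1 : ℂ) • v i := by
    refine Finset.sum_congr rfl fun i hi => ?_
    rw [Function.update_of_ne (Finset.ne_of_mem_erase hi)]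
  rw [e] at k2
  simp only [Function.update_self, inner_add_right, inner_smul_right] at k1 k2
  linear_combination (1 / 2 : ℂ) * k1 - (1 / 2 : ℂ) * k2

/-- Bilinear form of the orthogonality relations. -/
theorem aux_bilin {E H : Type*} [NormedAddCommGroup E] [InnerProductSpace ℂ E] [CompleteSpace E]
    [NormedAddCommGroup H] [InnerProductSpace ℂ H] [CompleteSpace H] {n : ℕ}
    (G : Fin n → (E →L[ℂ] H)) (T : (Fin n → ℂ) → (E →L[ℂ] H))
    (hT : ∀ z v, T z v = ∑ k, z k • G k v)
    (h : ∀ ζ : Fin n → ℂ, (∀ k, ‖ζ k‖ = 1) → IsUnitaryOp (T ζ)) :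
    (∀ lam z x y, inner ℂ (T lam x) (T z y)
      = ∑ k, (starRingEnd ℂ (lam k) * z k) * inner ℂ (G k x) (G k y)) ∧
    (∀ x y, inner ℂ x y = ∑ k, inner ℂ (G k x) (G k y)) := by
  have iso : ∀ ζ : Fin n → ℂ, (∀ k, ‖ζ k‖ = 1) → ∀ x y,
      inner ℂ (T ζ x) (T ζ y) = inner ℂ x y := by
    intro ζ hζ x y
    rw [← ContinuousLinearMap.adjoint_inner_right, ← ContinuousLinearMap.comp_apply, (h ζ hζ).1]
    rfl
  have first : ∀ lam z x y, inner ℂ (T lam x) (T z y)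
      = ∑ k, (starRingEnd ℂ (lam k) * z k) * inner ℂ (G k x) (G k y) := by
    intro lam z x y
    have orth := aux_orth (fun k => G k x) (fun k => G k y) (inner ℂ x y) (by
      intro ζ hζ
      rw [← hT, ← hT, iso ζ hζ])
    rw [hT, hT, sum_inner]
    refine Finset.sum_congr rfl fun k _ => ?_
    rw [inner_sum, Finset.sum_eq_single k]
    · rw [inner_smul_left, inner_smul_right]; ring
    · intro b _ hb
      rw [inner_smul_left, inner_smul_right, orth k b hb.symm]; simp
    · simp
  refine ⟨first, fun x y => ?_⟩
  rw [← iso (fun _ => 1) (by simp) x y, first]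
  simp

theorem aux_norm {E H : Type*} [NormedAddCommGroup E] [InnerProductSpace ℂ E]
    [NormedAddCommGroup H] [InnerProductSpace ℂ H] {n : ℕ}
    (G : Fin n → (E →L[ℂ] H)) (T : (Fin n → ℂ) → (E →L[ℂ] H))
    (h1 : ∀ lam z x y, inner ℂ (T lam x) (T z y)
      = ∑ k, (starRingEnd ℂ (lam k) * z k) * inner ℂ (G k x) (G k y))
    (h2 : ∀ x y, inner ℂ x y = ∑ k, inner ℂ (G k x) (G k y))
    (z : Fin n → ℂ) (hz : ∀ k, ‖z k‖ < 1) (x : E) : ‖T z x‖ ≤ ‖z‖ * ‖x‖ := by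
  have e1 : ‖T z x‖ ^ 2 = ∑ k, ‖z k‖ ^ 2 * ‖G k x‖ ^ 2 := by
    have := h1 z z x x
    simp only [inner_self_eq_norm_sq_to_K, Complex.conj_mul'] at this
    apply Complex.ofReal_injective
    push_cast
    exact this
  have e2 : ‖x‖ ^ 2 = ∑ k, ‖G k x‖ ^ 2 := by
    have := h2 x x
    simp only [inner_self_eq_norm_sq_to_K] at this
    apply Complex.ofReal_injective
    push_cast
    exact this
  apply le_of_sq_le_sq _ (by positivity)
  rw [mul_pow, e1, e2, Finset.mul_sum]
  refine Finset.sum_le_sum fun k _ => ?_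
  have := norm_le_pi_norm z k
  gcongr

theorem aux_colOp_eq (R : Nm →L[ℂ] X) : colOp R =
    (((WithLp.prodContinuousLinearEquiv 2 ℂ X Nm).symm :
      (X × Nm) →L[ℂ] WithLp 2 (X × Nm)) ∘L ContinuousLinearMap.inl ℂ X Nm) ∘L R
    + (((WithLp.prodContinuousLinearEquiv 2 ℂ X Nm).symm :
      (X × Nm) →L[ℂ] WithLp 2 (X × Nm)) ∘L ContinuousLinearMap.inr ℂ X Nm) := by
  ext u
  simp only [aux_colOp_apply, ContinuousLinearMap.add_apply, ContinuousLinearMap.comp_apply,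
    ContinuousLinearEquiv.coe_coe, ← map_add]
  simp

end AuxLemmas

/-- the transfer function `θ_α` of a multiparametric conservative scattering
LSDS admits the Agler decomposition
`I − θ_α(λ)* θ_α(z) = ∑_k (1 − conj(λ_k) z_k) F_k(λ)* F_k(z)` on the polydisc, with the
holomorphic functions `F_k(z) = G_k ∘ col((I − zA)⁻¹ zB, I)`; in particular `θ_α(0) = 0`. -/
theorem conservative_transfer_function_agler_decomposition {Nn : ℕ} {X Nm Np : Type*}
    [NormedAddCommGroup X] [InnerProductSpace ℂ X] [CompleteSpace X]
    [TopologicalSpace.SeparableSpace X]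
    [NormedAddCommGroup Nm] [InnerProductSpace ℂ Nm] [CompleteSpace Nm]
    [TopologicalSpace.SeparableSpace Nm]
    [NormedAddCommGroup Np] [InnerProductSpace ℂ Np] [CompleteSpace Np]
    [TopologicalSpace.SeparableSpace Np]
    (A : Fin Nn → (X →L[ℂ] X)) (B : Fin Nn → (Nm →L[ℂ] X))
    (C : Fin Nn → (X →L[ℂ] Np)) (D : Fin Nn → (Nm →L[ℂ] Np))
    (hcons : ∀ ζ : Fin Nn → ℂ, (∀ k, ‖ζ k‖ = 1) →
      IsUnitaryOp
        (blockOp (∑ k, ζ k • A k) (∑ k, ζ k • B k) (∑ k, ζ k • C k) (∑ k, ζ k • D k)))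
    (θ : (Fin Nn → ℂ) → (Nm →L[ℂ] Np))
    (hθ : ∀ z : Fin Nn → ℂ, θ z =
      ∑ k, z k • D k +
        (∑ k, z k • C k) ∘L (Ring.inverse (1 - ∑ k, z k • A k)) ∘L (∑ k, z k • B k))
    (F : Fin Nn → (Fin Nn → ℂ) → (Nm →L[ℂ] WithLp 2 (X × Np)))
    (hF : ∀ (k : Fin Nn) (z : Fin Nn → ℂ), F k z =
      blockOp (A k) (B k) (C k) (D k) ∘L
        colOp ((Ring.inverse (1 - ∑ j, z j • A j)) ∘L (∑ j, z j • B j))) :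
    (∀ z : Fin Nn → ℂ, (∀ k, ‖z k‖ < 1) → IsUnit ((1 : X →L[ℂ] X) - ∑ k, z k • A k)) ∧
    (∀ k : Fin Nn, DifferentiableOn ℂ (F k) {z : Fin Nn → ℂ | ∀ j, ‖z j‖ < 1}) ∧
    (∀ lam z : Fin Nn → ℂ, (∀ k, ‖lam k‖ < 1) → (∀ k, ‖z k‖ < 1) →
      (1 : Nm →L[ℂ] Nm) - adjoint (θ lam) ∘L θ z =
        ∑ k, (1 - starRingEnd ℂ (lam k) * z k) • (adjoint (F k lam) ∘L F k z)) ∧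
    θ 0 = 0 := by
  set G : Fin Nn → (WithLp 2 (X × Nm) →L[ℂ] WithLp 2 (X × Np)) :=
    fun k => blockOp (A k) (B k) (C k) (D k) with hG
  set T : (Fin Nn → ℂ) → (WithLp 2 (X × Nm) →L[ℂ] WithLp 2 (X × Np)) := fun z =>
    blockOp (∑ k, z k • A k) (∑ k, z k • B k) (∑ k, z k • C k) (∑ k, z k • D k) with hTdef
  have hT : ∀ z v, T z v = ∑ k, z k • G k v := fun z v => aux_blockOp_sum A B C D z v
  obtain ⟨h1, h2⟩ := aux_bilin G T hT hcons
  have hnorm := aux_norm G T h1 h2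
  have hunit : ∀ z : Fin Nn → ℂ, (∀ k, ‖z k‖ < 1) →
      IsUnit ((1 : X →L[ℂ] X) - ∑ k, z k • A k) := by
    intro z hz
    apply isUnit_one_sub_of_norm_lt_one
    have hz1 : ‖z‖ < 1 := (pi_norm_lt_iff one_pos).2 hz
    refine lt_of_le_of_lt (ContinuousLinearMap.opNorm_le_bound _ (norm_nonneg z) fun x => ?_) hz1
    have h := hnorm z hz (WithLp.toLp 2 (x, 0))
    have e : ‖(WithLp.toLp 2 (x, (0 : Nm)) : WithLp 2 (X × Nm))‖ = ‖x‖ := by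
      simp
    rw [e] at h
    refine le_trans ?_ h
    have := WithLp.norm_fst_le X (p := 2) (T z (WithLp.toLp 2 (x, (0 : Nm))))
    simpa [hTdef, aux_blockOp_apply] using this
  refine ⟨hunit, ?_, ?_, ?_⟩
  · intro k z hz
    apply DifferentiableAt.differentiableWithinAt
    have hinv : DifferentiableAt ℂ
        (fun z : Fin Nn → ℂ => Ring.inverse ((1 : X →L[ℂ] X) - ∑ j, z j • A j)) z := by
      obtain ⟨w, hw⟩ := hunit z hz
      have d1 : DifferentiableAt ℂ (Ring.inverse : (X →L[ℂ] X) → _)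
          ((1 : X →L[ℂ] X) - ∑ j, z j • A j) := by
        rw [← hw]; exact differentiableAt_inverse w.isUnit
      have d2 : DifferentiableAt ℂ (fun z : Fin Nn → ℂ => (1 : X →L[ℂ] X) - ∑ j, z j • A j) z := by
        fun_prop
      exact d1.comp z d2
    have hB : DifferentiableAt ℂ (fun z : Fin Nn → ℂ => ∑ j, z j • B j) z := by fun_prop
    have hFk : F k = fun z => blockOp (A k) (B k) (C k) (D k) ∘L
        colOp ((Ring.inverse (1 - ∑ j, z j • A j)) ∘L (∑ j, z j • B j)) := funext (hF k)
    rw [hFk]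
    simp only [aux_colOp_eq]
    exact (differentiableAt_const _).clm_comp
      (((differentiableAt_const _).clm_comp (hinv.clm_comp hB)).add_const _)
  · intro lam z hlam hz
    have hcol : ∀ z : Fin Nn → ℂ, (∀ k, ‖z k‖ < 1) → ∀ u,
        T z (colOp ((Ring.inverse (1 - ∑ j, z j • A j)) ∘L (∑ j, z j • B j)) u)
        = WithLp.toLp 2 (Ring.inverse (1 - ∑ j, z j • A j) ((∑ j, z j • B j) u), θ z u) := by
      intro z hz u
      have hm := Ring.mul_inverse_cancel _ (hunit z hz)
      have hm' := congrArg (fun L : X →L[ℂ] X => L ((∑ j, z j • B j) u)) hm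
      simp only [ContinuousLinearMap.mul_apply, ContinuousLinearMap.one_apply,
        ContinuousLinearMap.sub_apply] at hm'
      rw [aux_colOp_apply, hTdef]
      simp only [aux_blockOp_apply, hθ, ContinuousLinearMap.comp_apply,
        ContinuousLinearMap.add_apply]
      congr 2
      · exact (sub_eq_iff_eq_add'.1 hm').symm
      · exact add_comm _ _
    ext u
    apply ext_inner_left ℂ
    intro w
    have q1 := h1 lam z (colOp ((Ring.inverse (1 - ∑ j, lam j • A j)) ∘L (∑ j, lam j • B j)) w)
      (colOp ((Ring.inverse (1 - ∑ j, z j • A j)) ∘L (∑ j, z j • B j)) u)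
    have q2 := h2 (colOp ((Ring.inverse (1 - ∑ j, lam j • A j)) ∘L (∑ j, lam j • B j)) w)
      (colOp ((Ring.inverse (1 - ∑ j, z j • A j)) ∘L (∑ j, z j • B j)) u)
    rw [hcol lam hlam, hcol z hz] at q1
    rw [aux_colOp_apply, aux_colOp_apply] at q2
    have r : ∀ k, inner ℂ (F k lam w) (F k z u) = inner ℂ
      (G k (colOp ((Ring.inverse (1 - ∑ j, lam j • A j)) ∘L (∑ j, lam j • B j)) w))
      (G k (colOp ((Ring.inverse (1 - ∑ j, z j • A j)) ∘L (∑ j, z j • B j)) u)) := by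
      intro k; rw [hF, hF]; rfl
    simp only [← aux_colOp_apply] at q2
    simp only [← r] at q1 q2
    rw [aux_colOp_apply, aux_colOp_apply] at q2
    rw [WithLp.prod_inner_apply] at q1 q2
    simp only [ContinuousLinearMap.comp_apply] at q1 q2
    simp only [ContinuousLinearMap.sub_apply, ContinuousLinearMap.one_apply,
      ContinuousLinearMap.comp_apply, ContinuousLinearMap.sum_apply,
      ContinuousLinearMap.smul_apply, inner_sub_right, inner_sum, inner_smul_right,
      ContinuousLinearMap.adjoint_inner_right, sub_mul, one_mul, Finset.sum_sub_distrib]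
    linear_combination q2 - q1
  · rw [hθ]; simp
end
end

section
/- Let θ(z) = z₁z₂ on D². (a) The two-parametric system with state space X = ℂ, input and output spaces ℂ, given by A₁ = A₂ = 0, B₁ = 0, B₂ = 1, C₁ = 1, C₂ = 0, D₁ = D₂ = 0, is a closely connected conservative scattering LSDS (the 2×2 matrix ζG = [[0, ζ₂],[ζ₁, 0]] is unitary for all ζ ∈ T²) whose transfer function is θ. (b) The two-parametric system with state space X′ = ℂ³ given by A₁′ = [[0,0,−1/√2],[0,0,0],[0,1/√2,0]], B₁′ = (1/√2, 0, 0)ᵀ, C₁′ = (0, 1/√2, 0), D₁′ = 0, A₂′ = [[0,0,0],[0,0,1/√2],[−1/√2,0,0]], B₂′ = (0, 1/√2, 0)ᵀ, C₂′ = (1/√2, 0, 0), D₂′ = 0, is also a closely connected conservative scattering LSDS whose transfer function is θ. Consequently, closely connected conservative realizations of one and the same function in the generalized Schur class can have non-isomorphic state spaces (here of dimensions 1 and 3). -/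
open ContinuousLinearMap

noncomputable section

/-- Close connectedness of a multiparametric system. -/
def CloselyConnectedN {Nn : ℕ} {X Nm Np : Type*}
    [NormedAddCommGroup X] [InnerProductSpace ℂ X] [CompleteSpace X]
    [NormedAddCommGroup Nm] [InnerProductSpace ℂ Nm] [CompleteSpace Nm]
    [NormedAddCommGroup Np] [InnerProductSpace ℂ Np] [CompleteSpace Np]
    (A : Fin Nn → (X →L[ℂ] X)) (B : Fin Nn → (Nm →L[ℂ] X))
    (C : Fin Nn → (X →L[ℂ] Np)) : Prop :=
  (Submodule.span ℂ {x : X | ∃ (w : List (Fin Nn × Bool)) (y : X),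
      ((∃ k u, y = B k u) ∨ (∃ j v, y = adjoint (C j) v)) ∧
      x = ((w.map fun p => cond p.2 (A p.1) (adjoint (A p.1))).prod) y}).topologicalClosure
    = ⊤

/-- `1/√2` as a complex number. -/
def rc : ℂ := (Real.sqrt 2 : ℂ)⁻¹

/-- Example (a): the system on the state space `ℂ` with `A₁ = A₂ = 0`, `B₁ = 0`, `B₂ = 1`,
`C₁ = 1`, `C₂ = 0`, `D₁ = D₂ = 0`. -/
def Aex : Fin 2 → (ℂ →L[ℂ] ℂ) := ![0, 0]
def Bex : Fin 2 → (ℂ →L[ℂ] ℂ) := ![0, 1]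
def Cex : Fin 2 → (ℂ →L[ℂ] ℂ) := ![1, 0]
def Dex : Fin 2 → (ℂ →L[ℂ] ℂ) := ![0, 0]

/-- Example (b): the system on the state space `ℂ³`. -/
def Aex' : Fin 2 → (EuclideanSpace ℂ (Fin 3) →L[ℂ] EuclideanSpace ℂ (Fin 3)) :=
  ![Matrix.toEuclideanCLM (𝕜 := ℂ) !![0, 0, -rc; 0, 0, 0; 0, rc, 0],
    Matrix.toEuclideanCLM (𝕜 := ℂ) !![0, 0, 0; 0, 0, rc; -rc, 0, 0]]

def Bex' : Fin 2 → (ℂ →L[ℂ] EuclideanSpace ℂ (Fin 3)) :=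
  ![(1 : ℂ →L[ℂ] ℂ).smulRight (EuclideanSpace.single 0 rc),
    (1 : ℂ →L[ℂ] ℂ).smulRight (EuclideanSpace.single 1 rc)]

def Cex' : Fin 2 → (EuclideanSpace ℂ (Fin 3) →L[ℂ] ℂ) :=
  ![innerSL ℂ (EuclideanSpace.single 1 (starRingEnd ℂ rc)),
    innerSL ℂ (EuclideanSpace.single 0 (starRingEnd ℂ rc))]

def Dex' : Fin 2 → (ℂ →L[ℂ] ℂ) := ![0, 0]

lemma unitary_of_inner {X : Type*}
    [NormedAddCommGroup X] [InnerProductSpace ℂ X] [CompleteSpace X] [FiniteDimensional ℂ X]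
    (G : X →L[ℂ] X) (h : ∀ x y, inner ℂ (G x) (G y) = inner ℂ x y) : IsUnitaryOp G := by
  have h1 : adjoint G ∘L G = ContinuousLinearMap.id ℂ X :=
    (ContinuousLinearMap.inner_map_map_iff_adjoint_comp_self G).1 h
  refine ⟨h1, ?_⟩
  have h2 : (adjoint G).toLinearMap * G.toLinearMap = 1 := by
    ext x
    exact congrArg (fun T : X →L[ℂ] X => T x) h1
  have h3 := mul_eq_one_comm.1 h2
  ext x
  exact congrArg (fun T : X →ₗ[ℂ] X => T x) h3

lemma conj_mul_of_norm {z : ℂ} (h : ‖z‖ = 1) : starRingEnd ℂ z * z = 1 := by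
  rw [← Complex.normSq_eq_conj_mul_self, Complex.normSq_eq_norm_sq, h]; simp

lemma conj_rc : starRingEnd ℂ rc = rc := by
  simp [rc, Complex.conj_ofReal]

lemma rc_sq : rc * rc = 1 / 2 := by
  rw [rc, ← mul_inv, ← Complex.ofReal_mul, Real.mul_self_sqrt (by norm_num)]; norm_num

lemma rc_ne : rc ≠ 0 := by
  intro h; have := rc_sq; rw [h] at this; norm_num at this

lemma sumA (z : Fin 2 → ℂ) : ∑ k, z k • Aex' k =
    Matrix.toEuclideanCLM (𝕜 := ℂ) !![0, 0, -(z 0 * rc); 0, 0, z 1 * rc;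
      -(z 1 * rc), z 0 * rc, 0] := by
  rw [Fin.sum_univ_two]
  simp only [Aex', Matrix.cons_val_zero, Matrix.cons_val_one]
  rw [← map_smul (Matrix.toEuclideanCLM (n := Fin 3) (𝕜 := ℂ)),
    ← map_smul (Matrix.toEuclideanCLM (n := Fin 3) (𝕜 := ℂ)), ← map_add]
  congr 1
  ext i j
  fin_cases i <;> fin_cases j <;> simp

lemma sumA_apply (z : Fin 2 → ℂ) (x : EuclideanSpace ℂ (Fin 3)) : (∑ k, z k • Aex' k) x =
    !₂[-(z 0 * rc) * x 2, z 1 * rc * x 2, -(z 1 * rc) * x 0 + z 0 * rc * x 1] := by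
  rw [sumA]
  ext i
  rw [Matrix.ofLp_toEuclideanCLM]
  fin_cases i <;> simp [Matrix.mulVec, dotProduct, Fin.sum_univ_three]

lemma sumB_apply (z : Fin 2 → ℂ) (u : ℂ) : (∑ k, z k • Bex' k) u =
    !₂[z 0 * rc * u, z 1 * rc * u, 0] := by
  ext i
  fin_cases i <;> simp [Fin.sum_univ_two, Bex'] <;> ring

lemma sumC_apply (z : Fin 2 → ℂ) (x : EuclideanSpace ℂ (Fin 3)) : (∑ k, z k • Cex' k) x =
    z 0 * rc * x 1 + z 1 * rc * x 0 := by
  simp [Fin.sum_univ_two, Cex', EuclideanSpace.inner_single_left]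
  ring

lemma sumD (z : Fin 2 → ℂ) : (∑ k, z k • Dex' k) = 0 := by
  ext
  simp [Fin.sum_univ_two, Dex']

lemma blockOp_apply {X Nm Np : Type*}
    [NormedAddCommGroup X] [InnerProductSpace ℂ X]
    [NormedAddCommGroup Nm] [InnerProductSpace ℂ Nm]
    [NormedAddCommGroup Np] [InnerProductSpace ℂ Np]
    (A : X →L[ℂ] X) (B : Nm →L[ℂ] X) (C : X →L[ℂ] Np) (D : Nm →L[ℂ] Np)
    (x : WithLp 2 (X × Nm)) :
    blockOp A B C D x = WithLp.toLp 2 (A x.fst + B x.snd, C x.fst + D x.snd) := rfl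

lemma part_a1 (ζ : Fin 2 → ℂ) (h : ∀ k, ‖ζ k‖ = 1) :
      IsUnitaryOp
        (blockOp (∑ k, ζ k • Aex k) (∑ k, ζ k • Bex k) (∑ k, ζ k • Cex k)
          (∑ k, ζ k • Dex k)) := by
  apply unitary_of_inner
  intro x y
  have h0 := conj_mul_of_norm (h 0)
  have h1 := conj_mul_of_norm (h 1)
  simp only [blockOp_apply, WithLp.prod_inner_apply]
  simp [Fin.sum_univ_two, Aex, Bex, Cex, Dex]
  linear_combination (y.fst * starRingEnd ℂ x.fst) * h0 + (y.snd * starRingEnd ℂ x.snd) * h1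

lemma part_a2 : CloselyConnectedN Aex Bex Cex := by
  unfold CloselyConnectedN
  refine top_le_iff.1 (le_trans ?_ (Submodule.le_topologicalClosure _))
  intro x _
  refine Submodule.subset_span ⟨[], x, Or.inl ⟨1, x, ?_⟩, ?_⟩ <;> simp [Bex]

lemma part_a3 (z : Fin 2 → ℂ) : IsUnit ((1 : ℂ →L[ℂ] ℂ) - ∑ k, z k • Aex k) ∧
      ∑ k, z k • Dex k +
        (∑ k, z k • Cex k) ∘L (Ring.inverse (1 - ∑ k, z k • Aex k)) ∘L (∑ k, z k • Bex k)
        = (z 0 * z 1) • (1 : ℂ →L[ℂ] ℂ) := by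
  have hA : ∑ k, z k • Aex k = 0 := by
    ext
    simp [Fin.sum_univ_two, Aex]
  rw [hA]
  constructor
  · simp
  · ext
    simp [Fin.sum_univ_two, Bex, Cex, Dex]
    ring

lemma part_b1 (ζ : Fin 2 → ℂ) (h : ∀ k, ‖ζ k‖ = 1) :
      IsUnitaryOp
        (blockOp (∑ k, ζ k • Aex' k) (∑ k, ζ k • Bex' k) (∑ k, ζ k • Cex' k)
          (∑ k, ζ k • Dex' k)) := by
  apply unitary_of_inner
  intro x y
  have h0 := conj_mul_of_norm (h 0)
  have h1 := conj_mul_of_norm (h 1)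
  have hr := rc_sq
  simp only [blockOp_apply, WithLp.prod_inner_apply, sumA_apply, sumB_apply, sumC_apply, sumD]
  simp [PiLp.inner_apply, Fin.sum_univ_three, conj_rc]
  generalize starRingEnd ℂ (ζ 0) = a at *
  generalize starRingEnd ℂ (ζ 1) = b at *
  generalize ζ 0 = c at *
  generalize ζ 1 = d at *
  generalize starRingEnd ℂ (x.fst.ofLp 0) = X0
  generalize starRingEnd ℂ (x.fst.ofLp 1) = X1
  generalize starRingEnd ℂ (x.fst.ofLp 2) = X2
  generalize starRingEnd ℂ x.snd = U
  generalize y.fst.ofLp 0 = y0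
  generalize y.fst.ofLp 1 = y1
  generalize y.fst.ofLp 2 = y2
  generalize y.snd = v
  linear_combination (rc * rc * ((U - X2) * (v - y2) + 2 * X1 * y1)) * h0
    + (rc * rc * ((U + X2) * (v + y2) + 2 * X0 * y0)) * h1
    + (2 * (X0 * y0 + X1 * y1 + X2 * y2 + U * v)) * hr

lemma part_b2 : CloselyConnectedN Aex' Bex' Cex' := by
  unfold CloselyConnectedN
  refine top_le_iff.1 (le_trans ?_ (Submodule.le_topologicalClosure _))
  intro x _
  set S : Set (EuclideanSpace ℂ (Fin 3)) :=
    {x | ∃ (w : List (Fin 2 × Bool)) (y : EuclideanSpace ℂ (Fin 3)),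
      ((∃ k u, y = Bex' k u) ∨ (∃ j v, y = adjoint (Cex' j) v)) ∧
      x = ((w.map fun p => cond p.2 (Aex' p.1) (adjoint (Aex' p.1))).prod) y} with hS
  have e0 : Bex' 0 1 ∈ Submodule.span ℂ S :=
    Submodule.subset_span ⟨[], _, Or.inl ⟨0, 1, rfl⟩, by simp⟩
  have e1 : Bex' 1 1 ∈ Submodule.span ℂ S :=
    Submodule.subset_span ⟨[], _, Or.inl ⟨1, 1, rfl⟩, by simp⟩
  have e2 : Aex' 0 (Bex' 1 1) ∈ Submodule.span ℂ S :=
    Submodule.subset_span ⟨[(0, true)], _, Or.inl ⟨1, 1, rfl⟩, by simp⟩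
  have hx : x = (x 0 * rc⁻¹) • Bex' 0 1 + (x 1 * rc⁻¹) • Bex' 1 1
      + (x 2 * rc⁻¹ * rc⁻¹) • Aex' 0 (Bex' 1 1) := by
    have hr := rc_ne
    ext i
    fin_cases i <;>
      simp [Aex', Bex', Matrix.ofLp_toEuclideanCLM, Matrix.mulVec, dotProduct,
        Fin.sum_univ_three] <;> field_simp
  rw [hx]
  exact add_mem (add_mem (Submodule.smul_mem _ _ e0) (Submodule.smul_mem _ _ e1))
    (Submodule.smul_mem _ _ e2)

lemma part_b3 (z : Fin 2 → ℂ) (hz : ∀ k, ‖z k‖ < 1) :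
    IsUnit ((1 : EuclideanSpace ℂ (Fin 3) →L[ℂ] EuclideanSpace ℂ (Fin 3))
          - ∑ k, z k • Aex' k) ∧
      ∑ k, z k • Dex' k +
        (∑ k, z k • Cex' k) ∘L (Ring.inverse (1 - ∑ k, z k • Aex' k)) ∘L (∑ k, z k • Bex' k)
        = (z 0 * z 1) • (1 : ℂ →L[ℂ] ℂ) := by
  have hr := rc_sq
  have hu : IsUnit ((1 : EuclideanSpace ℂ (Fin 3) →L[ℂ] EuclideanSpace ℂ (Fin 3))
          - ∑ k, z k • Aex' k) := by
    rw [sumA, ← map_one (Matrix.toEuclideanCLM (n := Fin 3) (𝕜 := ℂ)), ← map_sub]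
    apply IsUnit.map
    rw [Matrix.isUnit_iff_isUnit_det, isUnit_iff_ne_zero]
    have hd : Matrix.det (1 - !![0, 0, -(z 0 * rc); 0, 0, z 1 * rc;
      -(z 1 * rc), z 0 * rc, 0]) = 1 - z 0 * z 1 := by
      rw [Matrix.det_fin_three]
      simp
      linear_combination (-2 * z 0 * z 1) * hr
    rw [hd]
    intro h
    have h1 : ‖z 0 * z 1‖ = 1 := by rw [← sub_eq_zero.1 h]; simp
    rw [norm_mul] at h1
    nlinarith [hz 0, hz 1, norm_nonneg (z 0), norm_nonneg (z 1)]
  refine ⟨hu, ?_⟩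
  have key : (Ring.inverse (1 - ∑ k, z k • Aex' k)) ∘L (∑ k, z k • Bex' k) =
      ∑ k, z k • Bex' k := by
    have e : (∑ k, z k • Bex' k) = (1 - ∑ k, z k • Aex' k) ∘L (∑ k, z k • Bex' k) := by
      refine ContinuousLinearMap.ext fun u => ?_
      rw [ContinuousLinearMap.comp_apply, _root_.sub_apply, sumA_apply, sumB_apply]
      ext i
      fin_cases i <;> simp
      ring
    have e2 := Ring.inverse_mul_cancel _ hu
    conv_lhs => rw [e]
    rw [← ContinuousLinearMap.comp_assoc]
    change (Ring.inverse (1 - ∑ k, z k • Aex' k) * (1 - ∑ k, z k • Aex' k)) ∘L _ = _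
    rw [e2]
    rfl
  rw [key, sumD, zero_add]
  refine ContinuousLinearMap.ext fun u => ?_
  rw [ContinuousLinearMap.comp_apply, sumC_apply, sumB_apply]
  simp
  linear_combination (2 * z 0 * z 1 * u) * hr

/-- both the one-dimensional system (a) and the three-dimensional system (b)
are closely connected conservative scattering systems with transfer function
`θ(z) = z₁ z₂` on the bidisc; hence closely connected conservative realizations of one and
the same generalized Schur class function can have non-isomorphic state spaces
(of dimensions 1 and 3). -/
theorem example_nonisomorphic_closely_connected_conservative_realizations :
    -- (a) the system on ℂ is conservative
    (∀ ζ : Fin 2 → ℂ, (∀ k, ‖ζ k‖ = 1) →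
      IsUnitaryOp
        (blockOp (∑ k, ζ k • Aex k) (∑ k, ζ k • Bex k) (∑ k, ζ k • Cex k)
          (∑ k, ζ k • Dex k))) ∧
    CloselyConnectedN Aex Bex Cex ∧
    (∀ z : Fin 2 → ℂ, (∀ k, ‖z k‖ < 1) →
      IsUnit ((1 : ℂ →L[ℂ] ℂ) - ∑ k, z k • Aex k) ∧
      ∑ k, z k • Dex k +
        (∑ k, z k • Cex k) ∘L (Ring.inverse (1 - ∑ k, z k • Aex k)) ∘L (∑ k, z k • Bex k)
        = (z 0 * z 1) • (1 : ℂ →L[ℂ] ℂ)) ∧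
    -- (b) the system on ℂ³ is conservative
    (∀ ζ : Fin 2 → ℂ, (∀ k, ‖ζ k‖ = 1) →
      IsUnitaryOp
        (blockOp (∑ k, ζ k • Aex' k) (∑ k, ζ k • Bex' k) (∑ k, ζ k • Cex' k)
          (∑ k, ζ k • Dex' k))) ∧
    CloselyConnectedN Aex' Bex' Cex' ∧
    (∀ z : Fin 2 → ℂ, (∀ k, ‖z k‖ < 1) →
      IsUnit ((1 : EuclideanSpace ℂ (Fin 3) →L[ℂ] EuclideanSpace ℂ (Fin 3))
          - ∑ k, z k • Aex' k) ∧
      ∑ k, z k • Dex' k +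
        (∑ k, z k • Cex' k) ∘L (Ring.inverse (1 - ∑ k, z k • Aex' k)) ∘L (∑ k, z k • Bex' k)
        = (z 0 * z 1) • (1 : ℂ →L[ℂ] ℂ)) ∧
    -- the two state spaces are not isomorphic
    Module.finrank ℂ ℂ = 1 ∧ Module.finrank ℂ (EuclideanSpace ℂ (Fin 3)) = 3 := by
  exact ⟨part_a1, part_a2, fun z _ => part_a3 z, part_b1, part_b2, part_b3, by simp, by simp⟩
end
end
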